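/- Let [(Q,𝒬),T₁,(Δ₁,𝒟₁)] be a generator that generates a stochastic process (Yₙ)_{n∈ℕ} in (Δ₁,𝒟₁), and let g: (Δ₁,𝒟₁) → (Δ₂,𝒟₂) be a measurable map. Then T₂: Q × (𝒬⊗𝒟₂) → [0,1] defined by T₂(x, A×B) := T₁(x, A × g⁻¹(B)) is a generator with output space (Δ₂,𝒟₂), and T₂ generates the stochastic process (g∘Yₙ)_{n∈ℕ} in (Δ₂,𝒟₂). -/

import Mathlib

open MeasureTheory ProbabilityTheory
open scoped ENNReal

namespace HiddenSources

variable {Q Δ : Type*}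

/-- The iterated integral appearing in the finite-dimensional marginals:
`fdmAux T n x B = ∫_{Q×B₁}⋯∫_{Q×Bₙ} T(x_{n-1}, d(xₙ,yₙ)) ⋯ T(x, d(x₁,y₁))`. -/
noncomputable def fdmAux [MeasurableSpace Q] [MeasurableSpace Δ] (T : Kernel Q (Q × Δ)) :
    (n : ℕ) → Q → (Fin n → Set Δ) → ℝ≥0∞
  | 0, _, _ => 1
  | n + 1, x, B =>
      ∫⁻ p : Q × Δ, Set.indicator (B 0) (fun _ => fdmAux T n p.1 fun i => B i.succ) p.2 ∂(T x)

/-- The finite-dimensional marginal `Pₙ^{μ,T}(B₁ × ⋯ × Bₙ)` of the observed process of the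
generator `T` with initial distribution `μ`. -/
noncomputable def fdm [MeasurableSpace Q] [MeasurableSpace Δ] (T : Kernel Q (Q × Δ))
    (μ : Measure Q) (n : ℕ) (B : Fin n → Set Δ) : ℝ≥0∞ :=
  ∫⁻ x, fdmAux T n x B ∂μ

/-- `P` is the path measure `P^{μ,T}` on `Δ^ℕ`: a probability measure whose cylinder
sets have measure given by the finite-dimensional marginals `Pₙ^{μ,T}`. -/
def IsPathMeasure [MeasurableSpace Q] [MeasurableSpace Δ] (T : Kernel Q (Q × Δ))
    (μ : Measure Q) (P : Measure (ℕ → Δ)) : Prop :=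
  IsProbabilityMeasure P ∧
    ∀ (n : ℕ) (B : Fin n → Set Δ), (∀ i, MeasurableSet (B i)) →
      P {y | ∀ i : Fin n, y i ∈ B i} = fdm T μ n B

/-- `im(G_T)`: the set of stochastic processes (identified with their path measures on
`Δ^ℕ`) generated by `T`, as the initial distribution `μ` ranges over the probability
measures on `Q`. -/
def genSet [MeasurableSpace Q] [MeasurableSpace Δ] (T : Kernel Q (Q × Δ)) :
    Set (Measure (ℕ → Δ)) :=
  {P | ∃ μ : Measure Q, IsProbabilityMeasure μ ∧ IsPathMeasure T μ P}

theorem measurableSet_setOf_forall_apply_mem {ι κ : Type*} [Countable κ] {α : ι → Type*}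
    [∀ i, MeasurableSpace (α i)] (e : κ → ι) {B : ∀ k, Set (α (e k))}
    (hB : ∀ k, MeasurableSet (B k)) : MeasurableSet {y : ∀ i, α i | ∀ k, y (e k) ∈ B k} := by
  rw [Set.ofPred_forall]
  exact .iInter fun k => measurable_pi_apply (e k) (hB k)

section OutputMap

variable {Δ' : Type*} [MeasurableSpace Q] [MeasurableSpace Δ] [MeasurableSpace Δ']

theorem measurable_indicator_snd {M : Type*} [Zero M] [MeasurableSpace M] {f : Q → M}
    (hf : Measurable f) {B : Set Δ} (hB : MeasurableSet B) :
    Measurable fun p : Q × Δ => B.indicator (fun _ => f p.1) p.2 :=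
  (hf.comp measurable_fst).indicator (measurable_snd hB)

/-- The generator `T` with its outputs relabelled by `g`: the pushforward of `T` under `id × g`.
Because of the convention for `Kernel.map`, this is the zero kernel when `id × g` is not
measurable. -/
noncomputable def mapOutput (T : Kernel Q (Q × Δ)) (g : Δ → Δ') : Kernel Q (Q × Δ') :=
  T.map (Prod.map id g)

theorem mapOutput_apply (T : Kernel Q (Q × Δ)) {g : Δ → Δ'} (hg : Measurable g) (x : Q) :
    mapOutput T g x = (T x).map (Prod.map id g) :=
  Kernel.map_apply T (measurable_id.prodMap hg) x

theorem mapOutput_apply_prod (T : Kernel Q (Q × Δ)) {g : Δ → Δ'} (hg : Measurable g) (x : Q)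
    {A : Set Q} {B : Set Δ'} (hA : MeasurableSet A) (hB : MeasurableSet B) :
    mapOutput T g x (A ×ˢ B) = T x (A ×ˢ (g ⁻¹' B)) := by
  rw [mapOutput_apply T hg, Measure.map_apply (measurable_id.prodMap hg) (hA.prod hB),
    Set.preimage_prod_map_prod, Set.preimage_id]

theorem isMarkovKernel_mapOutput (T : Kernel Q (Q × Δ)) [IsMarkovKernel T] {g : Δ → Δ'}
    (hg : Measurable g) : IsMarkovKernel (mapOutput T g) :=
  Kernel.IsMarkovKernel.map T (measurable_id.prodMap hg)

theorem lintegral_mapOutput (T : Kernel Q (Q × Δ)) {g : Δ → Δ'} (hg : Measurable g) (x : Q)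
    {f : Q × Δ' → ℝ≥0∞} (hf : Measurable f) :
    ∫⁻ p, f p ∂(mapOutput T g x) = ∫⁻ p, f (p.1, g p.2) ∂(T x) := by
  rw [mapOutput_apply T hg, lintegral_map hf (measurable_id.prodMap hg)]
  rfl

theorem measurable_fdmAux (T : Kernel Q (Q × Δ)) {n : ℕ} {B : Fin n → Set Δ}
    (hB : ∀ i, MeasurableSet (B i)) : Measurable fun x => fdmAux T n x B := by
  induction n with
  | zero => exact measurable_const
  | succ n ih =>
    exact (measurable_indicator_snd (ih fun i => hB i.succ) (hB 0)).lintegral_kernel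

theorem fdmAux_mapOutput (T : Kernel Q (Q × Δ)) {g : Δ → Δ'} (hg : Measurable g) {n : ℕ}
    (x : Q) {B : Fin n → Set Δ'} (hB : ∀ i, MeasurableSet (B i)) :
    fdmAux (mapOutput T g) n x B = fdmAux T n x fun i => g ⁻¹' B i := by
  induction n generalizing x with
  | zero => rfl
  | succ n ih =>
    have hB_succ : ∀ i : Fin n, MeasurableSet (B i.succ) := fun i => hB i.succ
    have h_meas := measurable_indicator_snd (measurable_fdmAux (mapOutput T g) hB_succ) (hB 0)
    calc fdmAux (mapOutput T g) (n + 1) x B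
        = ∫⁻ p, (B 0).indicator (fun _ => fdmAux (mapOutput T g) n p.1 fun i => B i.succ) (g p.2)
            ∂(T x) := lintegral_mapOutput T hg x h_meas
      _ = ∫⁻ p, (B 0).indicator (fun _ => fdmAux T n p.1 fun i => g ⁻¹' B i.succ) (g p.2)
            ∂(T x) := by simp only [ih _ hB_succ]
      _ = fdmAux T (n + 1) x fun i => g ⁻¹' B i := rfl

theorem fdm_mapOutput (T : Kernel Q (Q × Δ)) {g : Δ → Δ'} (hg : Measurable g) (μ : Measure Q)
    {n : ℕ} {B : Fin n → Set Δ'} (hB : ∀ i, MeasurableSet (B i)) :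
    fdm (mapOutput T g) μ n B = fdm T μ n fun i => g ⁻¹' B i :=
  lintegral_congr fun x => fdmAux_mapOutput T hg x hB

theorem IsPathMeasure.map_comp {T : Kernel Q (Q × Δ)} {μ : Measure Q}
    {P : Measure (ℕ → Δ)} (hP : IsPathMeasure T μ P) {g : Δ → Δ'} (hg : Measurable g) :
    IsPathMeasure (mapOutput T g) μ (P.map fun y n => g (y n)) := by
  obtain ⟨_, hP_cylinder⟩ := hP
  have hg_path : Measurable fun (y : ℕ → Δ) n => g (y n) :=
    measurable_pi_lambda _ fun n => hg.comp (measurable_pi_apply n)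
  refine ⟨Measure.isProbabilityMeasure_map hg_path.aemeasurable, fun n B hB => ?_⟩
  calc P.map (fun y n => g (y n)) {y | ∀ i : Fin n, y i ∈ B i}
      = P {y | ∀ i : Fin n, y i ∈ g ⁻¹' B i} :=
        Measure.map_apply hg_path (measurableSet_setOf_forall_apply_mem Fin.val hB)
    _ = fdm T μ n fun i => g ⁻¹' B i := hP_cylinder n _ fun i => hg (hB i)
    _ = fdm (mapOutput T g) μ n B := (fdm_mapOutput T hg μ hB).symm

end OutputMap

/-- **Corollary 3.4.** Given a generator `T₁` with output space `(Δ₁,𝒟₁)` and a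
measurable map `g : Δ₁ → Δ₂`, the kernel `T₂` with `T₂(x, A × B) := T₁(x, A × g⁻¹(B))`
is a generator with output space `(Δ₂,𝒟₂)`, and whenever `T₁` generates a process
`(Yₙ)` (from initial distribution `μ` with path measure `P`), `T₂` generates the
process `(g ∘ Yₙ)`. -/
theorem exists_output_transformed_generator {Q Δ₁ Δ₂ : Type*}
    [MeasurableSpace Q] [MeasurableSpace Δ₁] [MeasurableSpace Δ₂]
    (T₁ : Kernel Q (Q × Δ₁)) [IsMarkovKernel T₁]
    (g : Δ₁ → Δ₂) (hg : Measurable g) :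
    ∃ T₂ : Kernel Q (Q × Δ₂), IsMarkovKernel T₂ ∧
      (∀ (x : Q) (A : Set Q) (B : Set Δ₂), MeasurableSet A → MeasurableSet B →
        T₂ x (A ×ˢ B) = T₁ x (A ×ˢ (g ⁻¹' B))) ∧
      ∀ (μ : Measure Q), IsProbabilityMeasure μ → ∀ P : Measure (ℕ → Δ₁),
        IsPathMeasure T₁ μ P → IsPathMeasure T₂ μ (P.map fun y n => g (y n)) := by
  refine ⟨mapOutput T₁ g, isMarkovKernel_mapOutput T₁ hg, ?_, ?_⟩
  · exact fun x A B hA hB => mapOutput_apply_prod T₁ hg x hA hB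
  · exact fun μ _ P hP => hP.map_comp hg

end HiddenSources
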